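/- arXiv:2104.12127 — 2 statements merged into one kernel-verified Lean document; each statement's English description precedes it below -/
import Mathlib

section
/- Let {Z_t}_{t=1}^T be a sequence of centered Bernoulli random variables (i.e., each Z_t = W_t − E(W_t) for a {0,1}-valued W_t, so E(Z_t) = 0 and |Z_t| ≤ 1) whose α-mixing coefficients satisfy α(l) < exp(−K_α l^{r_α}) for some K_α > 0 and r_α > 0. Let p = ⌊K_p T^{r_p}⌋ for some K_p > 0 and r_p ∈ [0, r_α/(r_α+1)), and define ε_T = sqrt(K_1 K_2 p log(T) / T^{r_α/(r_α+1)}) + sqrt(K_2 log(T) / T^{r_α/(r_α+1)}), where K_1 = 3/2 and K_2 = 64σ² with σ² = 1/4 + 8 Σ_{l=1}^∞ α(l). Then, for any K_3 > 0 and all T sufficiently large, (1 + K_3 p^{1/2}/ε_T)^p · P(|(1/T) Σ_{t=1}^T Z_t| > ε_T) ≤ 4/T + o(1/T). -/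
/-!
For variables `X`, `Y` with values in `[0, M]` and `[0, N]`, measurable with respect to the past up
to time `s` and the future from time `s + l`, the layer cake formula applied to `X` and then to `Y`
gives `|E[XY] - E[X] E[Y]| ≤ α(l) M N`. With `X`, `Y` exponentials this makes the moment generating
function of `∑ i < n, Z (τ i)` nearly multiplicative along times `τ i` that are `m` apart, so that
Hoeffding's lemma bounds it by `exp (n u² / 2) (1 + n α(m) exp (n |u|))`.

Jensen's inequality over the `m` residue classes modulo `m` turns this into a bound for the full sum
at the parameter `u / m`, and Chernoff's inequality with `u = ε` gives a tail of order
`exp (-T ε² / (2 m))`. Taking `m` of order `T ^ (1 / (r + 1))` leaves `n ≤ Q := T ^ (r / (r + 1))`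
terms per class while `α(m) ≤ exp (-K Q)`, so the mixing error `n α(m) exp (n ε)` vanishes as soon
as `ε → 0`. The threshold `ε_T` is such that the exponent `Q ε² / 4` exceeds `(p + 1) log T`, which
beats the prefactor because `1 + K₃ √p / ε ≤ 1 + K₃ √T ≤ T`.
-/

open MeasureTheory Filter Asymptotics

noncomputable section

/-- The α-mixing coefficients of a sequence {Z_t}: α(l) = sup_s sup_{A,B}
|P(A∩B) − P(A)P(B)| over A in the σ-algebra generated by {Z_t : t ≤ s} and
B in the σ-algebra generated by {Z_t : t ≥ s + l}. -/
def alphaMix {Ω : Type*} [MeasurableSpace Ω] (μ : Measure Ω)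
    {E : Type*} [MeasurableSpace E] (Z : ℕ → Ω → E) (l : ℕ) : ℝ :=
  sSup {r : ℝ | ∃ s : ℕ, ∃ A B : Set Ω,
    MeasurableSet[⨆ t ∈ Set.Iic s, MeasurableSpace.comap (Z t) inferInstance] A ∧
    MeasurableSet[⨆ t ∈ Set.Ici (s + l), MeasurableSpace.comap (Z t) inferInstance] B ∧
    r = |(μ (A ∩ B)).toReal - (μ A).toReal * (μ B).toReal|}

section Covariance

variable {Ω : Type*} {m₁ m₂ mΩ : MeasurableSpace Ω} {μ : Measure Ω} {X Y : Ω → ℝ} {a M N : ℝ}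

lemma abs_integral_sub_integral_le_of_superlevel {ν₁ ν₂ : Measure Ω} [IsFiniteMeasure ν₁]
    [IsFiniteMeasure ν₂] (hX : Measurable X) (hM : 0 ≤ M)
    (hX₁ : ∀ᵐ ω ∂ν₁, X ω ∈ Set.Icc 0 M) (hX₂ : ∀ᵐ ω ∂ν₂, X ω ∈ Set.Icc 0 M)
    (h : ∀ t, |ν₁.real {ω | t ≤ X ω} - ν₂.real {ω | t ≤ X ω}| ≤ a) :
    |∫ ω, X ω ∂ν₁ - ∫ ω, X ω ∂ν₂| ≤ a * M := by
  have integrableOn_measureReal (ν : Measure Ω) [IsFiniteMeasure ν] :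
      IntegrableOn (fun t ↦ ν.real {ω | t ≤ X ω}) (Set.Ioc 0 M) := by
    have hanti : Antitone fun t ↦ ν.real {ω | t ≤ X ω} :=
      fun _ _ hst ↦ measureReal_mono fun _ hω ↦ hst.trans hω
    exact (intervalIntegrable_iff_integrableOn_Ioc_of_le hM).1 hanti.intervalIntegrable
  have layercake (ν : Measure Ω) [IsFiniteMeasure ν] (hν : ∀ᵐ ω ∂ν, X ω ∈ Set.Icc 0 M) :
      ∫ ω, X ω ∂ν = ∫ t in Set.Ioc 0 M, ν.real {ω | t ≤ X ω} :=
    (Integrable.of_mem_Icc 0 M hX.aemeasurable hν).integral_eq_integral_Ioc_meas_le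
      (hν.mono fun _ hω ↦ hω.1) (hν.mono fun _ hω ↦ hω.2)
  rw [layercake ν₁ hX₁, layercake ν₂ hX₂,
    ← integral_sub (integrableOn_measureReal ν₁) (integrableOn_measureReal ν₂)]
  simpa [hM] using norm_setIntegral_le_of_norm_le_const (μ := volume) (s := Set.Ioc 0 M) (C := a)
    (f := fun t ↦ ν₁.real {ω | t ≤ X ω} - ν₂.real {ω | t ≤ X ω}) (by simp) fun t _ ↦ h t

lemma measureReal_withDensity_ofReal (hX : AEStronglyMeasurable X μ) (hX₀ : 0 ≤ᵐ[μ] X)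
    {B : Set Ω} (hB : MeasurableSet B) :
    (μ.withDensity fun ω ↦ ENNReal.ofReal (X ω)).real B = ∫ ω in B, X ω ∂μ := by
  rw [measureReal_def, withDensity_apply _ hB,
    integral_eq_lintegral_of_nonneg_ae (ae_restrict_of_ae hX₀) hX.restrict]

lemma integral_withDensity_ofReal (hX : Measurable X) (hX₀ : 0 ≤ᵐ[μ] X) :
    ∫ ω, Y ω ∂μ.withDensity (fun ω ↦ ENNReal.ofReal (X ω)) = ∫ ω, X ω * Y ω ∂μ := by
  rw [integral_withDensity_eq_integral_toReal_smul hX.ennreal_ofReal (by simp)]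
  refine integral_congr_ae (hX₀.mono fun ω hω ↦ ?_)
  simp only [ENNReal.toReal_ofReal hω, smul_eq_mul]

variable [IsProbabilityMeasure μ]

lemma abs_setIntegral_sub_measureReal_mul_integral_le (hm₁ : m₁ ≤ mΩ) (hX : Measurable[m₁] X)
    (hXM : ∀ᵐ ω ∂μ, X ω ∈ Set.Icc 0 M) {B : Set Ω}
    (h : ∀ A, MeasurableSet[m₁] A → |μ.real (A ∩ B) - μ.real A * μ.real B| ≤ a) :
    |∫ ω in B, X ω ∂μ - μ.real B * ∫ ω, X ω ∂μ| ≤ a * M := by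
  obtain ⟨ω, hω⟩ := hXM.exists
  have := Measure.smul_finite μ (measure_ne_top μ B)
  have key := abs_integral_sub_integral_le_of_superlevel (ν₁ := μ.restrict B)
    (ν₂ := μ B • μ) (a := a) (hX.mono hm₁ le_rfl) (hω.1.trans hω.2) (ae_restrict_of_ae hXM)
    (Measure.ae_smul_measure hXM _) fun t ↦ by
      have hA : MeasurableSet[m₁] {ω | t ≤ X ω} := hX measurableSet_Ici
      rw [measureReal_restrict_apply (hm₁ _ hA), measureReal_ennreal_smul_apply, mul_comm]
      exact h _ hA
  rwa [integral_smul_measure] at key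

/-- Ibragimov's covariance inequality. -/
lemma abs_integral_mul_sub_integral_mul_integral_le (hm₁ : m₁ ≤ mΩ) (hm₂ : m₂ ≤ mΩ)
    (hX : Measurable[m₁] X) (hY : Measurable[m₂] Y)
    (hXM : ∀ᵐ ω ∂μ, X ω ∈ Set.Icc 0 M) (hYN : ∀ᵐ ω ∂μ, Y ω ∈ Set.Icc 0 N)
    (h : ∀ A B, MeasurableSet[m₁] A → MeasurableSet[m₂] B →
      |μ.real (A ∩ B) - μ.real A * μ.real B| ≤ a) :
    |∫ ω, X ω * Y ω ∂μ - (∫ ω, X ω ∂μ) * ∫ ω, Y ω ∂μ| ≤ a * M * N := by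
  obtain ⟨ω, hω⟩ := hYN.exists
  have hXm : Measurable X := hX.mono hm₁ le_rfl
  have hX₀ : 0 ≤ᵐ[μ] X := hXM.mono fun _ hω ↦ hω.1
  have hXi : Integrable X μ := .of_mem_Icc 0 M hXm.aemeasurable hXM
  have := isFiniteMeasure_withDensity_ofReal hXi.2
  have := Measure.smul_finite μ (c := ENNReal.ofReal (∫ ω, X ω ∂μ)) ENNReal.ofReal_ne_top
  have key := abs_integral_sub_integral_le_of_superlevel
    (ν₁ := μ.withDensity fun ω ↦ ENNReal.ofReal (X ω))
    (ν₂ := ENNReal.ofReal (∫ ω, X ω ∂μ) • μ) (a := a * M) (hY.mono hm₂ le_rfl)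
    (hω.1.trans hω.2) ((withDensity_absolutelyContinuous μ _).ae_le hYN)
    (Measure.ae_smul_measure hYN _) fun t ↦ by
      have hB : MeasurableSet[m₂] {ω | t ≤ Y ω} := hY measurableSet_Ici
      rw [measureReal_withDensity_ofReal hXm.aestronglyMeasurable hX₀ (hm₂ _ hB),
        measureReal_ennreal_smul_apply, ENNReal.toReal_ofReal (integral_nonneg_of_ae hX₀), mul_comm]
      exact abs_setIntegral_sub_measureReal_mul_integral_le hm₁ hX hXM fun A hA ↦ h A _ hA hB
  rwa [integral_withDensity_ofReal hXm hX₀, integral_smul_measure,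
    ENNReal.toReal_ofReal (integral_nonneg_of_ae hX₀), smul_eq_mul] at key

end Covariance

section Mixing

variable {Ω E : Type*} [MeasurableSpace E] {Z : ℕ → Ω → E} {l s t : ℕ}

/-- The σ-algebra `F^s_{-∞}` generated by the process `Z` up to time `s`, in the form in which it
occurs in `alphaMix`. -/
abbrev pastSigma (Z : ℕ → Ω → E) (s : ℕ) : MeasurableSpace Ω :=
  ⨆ t ∈ Set.Iic s, MeasurableSpace.comap (Z t) inferInstance

/-- The σ-algebra `F^∞_s` generated by the process `Z` from time `s` on, in the form in which it
occurs in `alphaMix`. -/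
abbrev futureSigma (Z : ℕ → Ω → E) (s : ℕ) : MeasurableSpace Ω :=
  ⨆ t ∈ Set.Ici s, MeasurableSpace.comap (Z t) inferInstance

lemma measurable_pastSigma (h : t ≤ s) : Measurable[pastSigma Z s] (Z t) :=
  measurable_iff_comap_le.2 <| le_iSup₂_of_le t h le_rfl

lemma measurable_futureSigma (h : s ≤ t) : Measurable[futureSigma Z s] (Z t) :=
  measurable_iff_comap_le.2 <| le_iSup₂_of_le t h le_rfl

variable [mΩ : MeasurableSpace Ω] {μ : Measure Ω}

lemma pastSigma_le (hZ : ∀ t, Measurable (Z t)) : pastSigma Z s ≤ mΩ :=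
  iSup₂_le fun t _ ↦ (hZ t).comap_le

lemma futureSigma_le (hZ : ∀ t, Measurable (Z t)) : futureSigma Z s ≤ mΩ :=
  iSup₂_le fun t _ ↦ (hZ t).comap_le

lemma alphaMix_nonneg : 0 ≤ alphaMix μ Z l := by
  refine Real.sSup_nonneg ?_
  rintro _ ⟨s, A, B, -, -, rfl⟩
  positivity

variable [IsProbabilityMeasure μ]

lemma abs_measureReal_inter_sub_mul_le_alphaMix {A B : Set Ω}
    (hA : MeasurableSet[pastSigma Z s] A) (hB : MeasurableSet[futureSigma Z (s + l)] B) :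
    |μ.real (A ∩ B) - μ.real A * μ.real B| ≤ alphaMix μ Z l := by
  refine le_csSup ⟨1, ?_⟩ ⟨s, A, B, hA, hB, rfl⟩
  rintro _ ⟨_, A, B, -, -, rfl⟩
  exact abs_sub_le_of_nonneg_of_le measureReal_nonneg measureReal_le_one (by positivity)
    (mul_le_one₀ measureReal_le_one measureReal_nonneg measureReal_le_one)

end Mixing

section MomentGeneratingFunction

open ProbabilityTheory

lemma exp_mul_mem_Icc {u x b : ℝ} (hx : |x| ≤ b) :
    Real.exp (u * x) ∈ Set.Icc 0 (Real.exp (|u| * b)) := by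
  refine ⟨(Real.exp_pos _).le, Real.exp_le_exp.2 ?_⟩
  calc u * x ≤ |u| * |x| := by rw [← abs_mul]; exact le_abs_self _
    _ ≤ |u| * b := by gcongr

variable {Ω : Type*} [MeasurableSpace Ω] {μ : Measure Ω}

lemma mgf_sum_div_card_le {ι : Type*} {s : Finset ι} (hs : s.Nonempty) {X : ι → Ω → ℝ} {u C : ℝ}
    (hX : ∀ i ∈ s, Integrable (fun ω ↦ Real.exp (u * X i ω)) μ)
    (hC : ∀ i ∈ s, mgf (X i) μ u ≤ C) :
    mgf (∑ i ∈ s, X i) μ (u / s.card) ≤ C := by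
  have hcard : (s.card : ℝ) ≠ 0 := by exact_mod_cast hs.card_ne_zero
  have jensen (ω : Ω) : Real.exp (u / s.card * (∑ i ∈ s, X i) ω) ≤
      ∑ i ∈ s, (s.card : ℝ)⁻¹ * Real.exp (u * X i ω) := by
    have h := convexOn_exp.map_sum_le (t := s) (w := fun _ ↦ (s.card : ℝ)⁻¹)
      (p := fun i ↦ u * X i ω) (fun _ _ ↦ by positivity) (by simp [hcard])
      fun _ _ ↦ Set.mem_univ _
    simpa only [smul_eq_mul, ← Finset.mul_sum, ← mul_assoc, inv_mul_eq_div, Finset.sum_apply]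
      using h
  calc mgf (∑ i ∈ s, X i) μ (u / s.card)
      ≤ ∫ ω, ∑ i ∈ s, (s.card : ℝ)⁻¹ * Real.exp (u * X i ω) ∂μ :=
        integral_mono_of_nonneg (ae_of_all _ fun _ ↦ (Real.exp_pos _).le)
          (integrable_finsetSum _ fun i hi ↦ (hX i hi).const_mul _) (ae_of_all _ jensen)
    _ = ∑ i ∈ s, (s.card : ℝ)⁻¹ * mgf (X i) μ u := by
        rw [integral_finsetSum _ fun i hi ↦ (hX i hi).const_mul _]
        simp only [integral_const_mul, mgf]
    _ ≤ ∑ _ ∈ s, (s.card : ℝ)⁻¹ * C := by gcongr with i hi; exact hC i hi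
    _ = C := by rw [Finset.sum_const, nsmul_eq_mul, mul_inv_cancel_left₀ hcard]

lemma mgf_add_le_exp_mul_mgf {X R : Ω → ℝ} {u c : ℝ}
    (hX : Integrable (fun ω ↦ Real.exp (u * X ω)) μ) (hR : ∀ᵐ ω ∂μ, |R ω| ≤ c) :
    mgf (X + R) μ u ≤ Real.exp (|u| * c) * mgf X μ u := by
  rw [mgf, mgf, ← integral_const_mul]
  refine integral_mono_of_nonneg (ae_of_all _ fun _ ↦ (Real.exp_pos _).le) (hX.const_mul _)
    (hR.mono fun ω hω ↦ ?_)
  simp only [Pi.add_apply, mul_add, Real.exp_add]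
  rw [mul_comm]
  exact mul_le_mul_of_nonneg_right (exp_mul_mem_Icc hω).2 (Real.exp_pos _).le

variable [IsProbabilityMeasure μ]

lemma integrable_exp_mul_of_ae_abs_le {X : Ω → ℝ} {M : ℝ} (hX : Measurable X)
    (hXM : ∀ᵐ ω ∂μ, |X ω| ≤ M) (u : ℝ) : Integrable (fun ω ↦ Real.exp (u * X ω)) μ :=
  integrable_exp_mul_of_mem_Icc hX.aemeasurable (hXM.mono fun _ ↦ abs_le.1)

lemma mgf_le_exp_sq_div_two {X : Ω → ℝ} (hX : Measurable X) (hX₁ : ∀ᵐ ω ∂μ, |X ω| ≤ 1)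
    (hX₀ : ∫ ω, X ω ∂μ = 0) (u : ℝ) : mgf X μ u ≤ Real.exp (u ^ 2 / 2) := by
  have h := (hasSubgaussianMGF_of_mem_Icc_of_integral_eq_zero hX.aemeasurable
    (hX₁.mono fun _ ↦ abs_le.1) hX₀).mgf_le u
  norm_num at h
  exact h

lemma measureReal_le_abs_le_of_mgf_le {X : Ω → ℝ} {ε u C : ℝ} (hu : 0 ≤ u)
    (hX : ∀ v, Integrable (fun ω ↦ Real.exp (v * X ω)) μ)
    (h₁ : mgf X μ u ≤ C) (h₂ : mgf X μ (-u) ≤ C) :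
    μ.real {ω | ε ≤ |X ω|} ≤ 2 * (Real.exp (-u * ε) * C) := by
  have hsub : {ω | ε ≤ |X ω|} ⊆ {ω | ε ≤ X ω} ∪ {ω | X ω ≤ -ε} :=
    fun ω (hω : ε ≤ |X ω|) ↦ (le_abs.1 hω).imp_right le_neg_of_le_neg
  calc μ.real {ω | ε ≤ |X ω|} ≤ μ.real {ω | ε ≤ X ω} + μ.real {ω | X ω ≤ -ε} :=
        (measureReal_mono hsub).trans (measureReal_union_le _ _)
    _ ≤ Real.exp (-u * ε) * mgf X μ u + Real.exp (- -u * -ε) * mgf X μ (-u) :=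
        add_le_add (measure_ge_le_exp_mul_mgf ε hu (hX u))
          (measure_le_le_exp_mul_mgf (-ε) (neg_nonpos.2 hu) (hX (-u)))
    _ ≤ Real.exp (-u * ε) * C + Real.exp (- -u * -ε) * C := by gcongr
    _ = 2 * (Real.exp (-u * ε) * C) := by rw [neg_mul_neg]; ring

lemma abs_mgf_add_sub_mgf_mul_mgf_le {E : Type*} [MeasurableSpace E] {Z : ℕ → Ω → E} {l s : ℕ}
    (hZ : ∀ t, Measurable (Z t)) {X Y : Ω → ℝ} {M N : ℝ}
    (hX : Measurable[pastSigma Z s] X) (hY : Measurable[futureSigma Z (s + l)] Y)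
    (hXM : ∀ᵐ ω ∂μ, |X ω| ≤ M) (hYN : ∀ᵐ ω ∂μ, |Y ω| ≤ N) (u : ℝ) :
    |mgf (X + Y) μ u - mgf X μ u * mgf Y μ u| ≤ alphaMix μ Z l * Real.exp (|u| * (M + N)) := by
  have hcov := abs_integral_mul_sub_integral_mul_integral_le (μ := μ) (pastSigma_le hZ)
    (futureSigma_le hZ) (Real.measurable_exp.comp (hX.const_mul u))
    (Real.measurable_exp.comp (hY.const_mul u)) (hXM.mono fun _ ↦ exp_mul_mem_Icc)
    (hYN.mono fun _ ↦ exp_mul_mem_Icc) fun _ _ ↦ abs_measureReal_inter_sub_mul_le_alphaMix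
  simpa only [mgf, Pi.add_apply, mul_add, Real.exp_add, mul_assoc, Function.comp_apply] using hcov

end MomentGeneratingFunction

section BoundedProcess

open ProbabilityTheory

lemma sum_range_mul_eq_sum_sum_residue {M : Type*} [AddCommMonoid M] (f : ℕ → M) (m n : ℕ) :
    ∑ t ∈ Finset.range (n * m), f t =
      ∑ r ∈ Finset.range m, ∑ i ∈ Finset.range n, f (r + i * m) := by
  induction n with
  | zero => simp
  | succ n ih =>
    rw [Nat.succ_mul, Finset.sum_range_add, ih]
    simp only [Finset.sum_range_succ, Finset.sum_add_distrib, add_comm (n * m)]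

lemma measurable_finsetSum {ι Ω M : Type*} {_ : MeasurableSpace Ω} [MeasurableSpace M]
    [AddCommMonoid M] [MeasurableAdd₂ M] {s : Finset ι} {X : ι → Ω → M}
    (hX : ∀ i ∈ s, Measurable (X i)) : Measurable (∑ i ∈ s, X i) := by
  rw [Finset.sum_fn]
  exact Finset.measurable_sum s hX

variable {Ω : Type*} [MeasurableSpace Ω] {μ : Measure Ω} {Z : ℕ → Ω → ℝ} {m : ℕ}

lemma ae_abs_sum_le_card {ι : Type*} {X : ι → Ω → ℝ} (s : Finset ι)
    (hX₁ : ∀ i, ∀ᵐ ω ∂μ, |X i ω| ≤ 1) : ∀ᵐ ω ∂μ, |(∑ i ∈ s, X i) ω| ≤ s.card := by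
  have h : ∀ᵐ ω ∂μ, ∀ i ∈ s, |X i ω| ≤ 1 := (ae_ball_iff s.countable_toSet).2 fun i _ ↦ hX₁ i
  filter_upwards [h] with ω hω
  rw [Finset.sum_apply]
  simpa using (Finset.abs_sum_le_sum_abs _ _).trans (Finset.sum_le_sum hω)

variable [IsProbabilityMeasure μ]

lemma mgf_sum_range_succ_le_of_separated (hZ : ∀ t, Measurable (Z t))
    (hZ₁ : ∀ t, ∀ᵐ ω ∂μ, |Z t ω| ≤ 1) (hZ₀ : ∀ t, ∫ ω, Z t ω ∂μ = 0)
    {τ : ℕ → ℕ} (hτ : ∀ i, τ i + m ≤ τ (i + 1)) (u : ℝ) (n : ℕ) :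
    mgf (∑ i ∈ Finset.range (n + 1), Z (τ i)) μ u ≤
      mgf (∑ i ∈ Finset.range n, Z (τ i)) μ u * Real.exp (u ^ 2 / 2) +
        alphaMix μ Z m * Real.exp ((n + 1) * |u|) := by
  have hoeffding (t : ℕ) := mgf_le_exp_sq_div_two (hZ t) (hZ₁ t) (hZ₀ t) u
  rw [Finset.sum_range_succ]
  rcases n with _ | n
  · simpa using (hoeffding _).trans
      (le_add_of_nonneg_right (mul_nonneg alphaMix_nonneg (Real.exp_pos |u|).le))
  set S := ∑ i ∈ Finset.range (n + 1), Z (τ i)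
  have hτ_mono : Monotone τ :=
    monotone_nat_of_le_succ fun i ↦ (Nat.le_add_right _ _).trans (hτ i)
  have hS : Measurable[pastSigma Z (τ n)] S := measurable_finsetSum fun i hi ↦
    measurable_pastSigma (hτ_mono (Finset.mem_range_succ_iff.1 hi))
  have hS_le : ∀ᵐ ω ∂μ, |S ω| ≤ (n + 1 : ℕ) := by
    simpa only [Finset.card_range] using
      ae_abs_sum_le_card (Finset.range (n + 1)) fun i ↦ hZ₁ (τ i)
  have decoupling := (abs_le.1 (abs_mgf_add_sub_mgf_mul_mgf_le hZ hS
    (measurable_futureSigma (hτ n)) hS_le (hZ₁ _) u)).2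
  calc mgf (S + Z (τ (n + 1))) μ u
      ≤ mgf S μ u * mgf (Z (τ (n + 1))) μ u +
          alphaMix μ Z m * Real.exp (|u| * ((n + 1 : ℕ) + 1)) := by linarith
    _ ≤ mgf S μ u * Real.exp (u ^ 2 / 2) +
          alphaMix μ Z m * Real.exp (((n + 1 : ℕ) + 1) * |u|) := by
        rw [mul_comm |u|]
        gcongr
        · exact mgf_nonneg
        · exact hoeffding _

lemma mgf_sum_range_le_of_separated (hZ : ∀ t, Measurable (Z t))
    (hZ₁ : ∀ t, ∀ᵐ ω ∂μ, |Z t ω| ≤ 1) (hZ₀ : ∀ t, ∫ ω, Z t ω ∂μ = 0)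
    {τ : ℕ → ℕ} (hτ : ∀ i, τ i + m ≤ τ (i + 1)) (u : ℝ) (n : ℕ) :
    mgf (∑ i ∈ Finset.range n, Z (τ i)) μ u ≤
      Real.exp (n * (u ^ 2 / 2)) * (1 + alphaMix μ Z m * n * Real.exp (n * |u|)) := by
  have hα : 0 ≤ alphaMix μ Z m := alphaMix_nonneg
  induction n with
  | zero => simp
  | succ n ih =>
    push_cast
    set E := Real.exp ((n + 1) * (u ^ 2 / 2)) with hE
    set H := Real.exp ((n + 1) * |u|)
    have hH : Real.exp (n * |u|) ≤ H := Real.exp_le_exp.2 (by gcongr; simp)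
    have hE_one : 1 ≤ E := Real.one_le_exp (by positivity)
    have hE_succ : Real.exp (n * (u ^ 2 / 2)) * Real.exp (u ^ 2 / 2) = E := by
      rw [hE, ← Real.exp_add, add_one_mul]
    calc mgf (∑ i ∈ Finset.range (n + 1), Z (τ i)) μ u
        ≤ Real.exp (n * (u ^ 2 / 2)) * (1 + alphaMix μ Z m * n * Real.exp (n * |u|)) *
            Real.exp (u ^ 2 / 2) + alphaMix μ Z m * H :=
          (mgf_sum_range_succ_le_of_separated hZ hZ₁ hZ₀ hτ u n).trans (by gcongr)
      _ = E * (1 + alphaMix μ Z m * n * Real.exp (n * |u|)) + 1 * (alphaMix μ Z m * H) := by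
          rw [← hE_succ]; ring
      _ ≤ E * (1 + alphaMix μ Z m * n * H) + E * (alphaMix μ Z m * H) := by
          gcongr
      _ = E * (1 + alphaMix μ Z m * (n + 1) * H) := by ring

lemma mgf_sum_range_div_le (hZ : ∀ t, Measurable (Z t))
    (hZ₁ : ∀ t, ∀ᵐ ω ∂μ, |Z t ω| ≤ 1) (hZ₀ : ∀ t, ∫ ω, Z t ω ∂μ = 0)
    (hm : 0 < m) (u : ℝ) (T : ℕ) :
    mgf (∑ t ∈ Finset.range T, Z t) μ (u / m) ≤ Real.exp |u| *
      (Real.exp ((T / m : ℕ) * (u ^ 2 / 2)) *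
        (1 + alphaMix μ Z m * (T / m : ℕ) * Real.exp ((T / m : ℕ) * |u|))) := by
  have integrable_exp {ι : Type} (s : Finset ι) (τ : ι → ℕ) (v : ℝ) :
      Integrable (fun ω ↦ Real.exp (v * (∑ i ∈ s, Z (τ i)) ω)) μ :=
    integrable_exp_mul_of_ae_abs_le (measurable_finsetSum fun i _ ↦ hZ (τ i))
      (ae_abs_sum_le_card s fun i ↦ hZ₁ (τ i)) v
  have hm' : (0 : ℝ) < m := by exact_mod_cast hm
  set n := T / m
  set R := ∑ j ∈ Finset.range (T % m), Z (n * m + j)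
  have hsplit : ∑ t ∈ Finset.range T, Z t = ∑ t ∈ Finset.range (n * m), Z t + R := by
    rw [← Finset.sum_range_add, Nat.div_add_mod']
  have hR : ∀ᵐ ω ∂μ, |R ω| ≤ m := by
    filter_upwards [ae_abs_sum_le_card (Finset.range (T % m)) fun j ↦ hZ₁ (n * m + j)] with ω hω
    exact hω.trans (by simpa using (Nat.mod_lt T hm).le)
  have hclasses : mgf (∑ t ∈ Finset.range (n * m), Z t) μ (u / m) ≤
      Real.exp (n * (u ^ 2 / 2)) * (1 + alphaMix μ Z m * n * Real.exp (n * |u|)) := by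
    rw [sum_range_mul_eq_sum_sum_residue]
    simpa only [Finset.card_range] using mgf_sum_div_card_le (Finset.nonempty_range_iff.2 hm.ne')
      (fun r _ ↦ integrable_exp _ (fun i ↦ r + i * m) u)
      fun r _ ↦ mgf_sum_range_le_of_separated hZ hZ₁ hZ₀ (τ := fun i ↦ r + i * m)
        (fun i ↦ by rw [add_one_mul, add_assoc]) u n
  calc mgf (∑ t ∈ Finset.range T, Z t) μ (u / m)
      ≤ Real.exp (|u / m| * m) * mgf (∑ t ∈ Finset.range (n * m), Z t) μ (u / m) := by
        rw [hsplit]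
        exact mgf_add_le_exp_mul_mgf (integrable_exp _ id _) hR
    _ ≤ _ := by
        rw [abs_div, abs_of_pos hm', div_mul_cancel₀ _ hm'.ne']
        gcongr

/-- Chernoff's bound at the parameter `ε / m`. -/
lemma measureReal_lt_abs_mean_le (hZ : ∀ t, Measurable (Z t))
    (hZ₁ : ∀ t, ∀ᵐ ω ∂μ, |Z t ω| ≤ 1) (hZ₀ : ∀ t, ∫ ω, Z t ω ∂μ = 0)
    (hm : 0 < m) {ε : ℝ} (hε : 0 ≤ ε) (T : ℕ) :
    μ.real {ω | ε < |(T : ℝ)⁻¹ * ∑ t ∈ Finset.range T, Z t ω|} ≤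
      2 * (Real.exp ε * (1 + alphaMix μ Z m * (T / m : ℕ) * Real.exp ((T / m : ℕ) * ε))) *
        Real.exp (-(T / m * ε ^ 2 / 2)) := by
  set S := ∑ t ∈ Finset.range T, Z t
  have hsub : {ω | ε < |(T : ℝ)⁻¹ * ∑ t ∈ Finset.range T, Z t ω|} ⊆ {ω | ε * T ≤ |S ω|} := by
    intro ω hω
    rw [Set.mem_ofPred_eq, abs_mul, abs_inv, Nat.abs_cast, inv_mul_eq_div,
      ← Finset.sum_apply] at hω
    exact mul_le_of_le_div₀ (abs_nonneg _) T.cast_nonneg hω.le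
  have tail := measureReal_le_abs_le_of_mgf_le (X := S) (ε := ε * T) (div_nonneg hε m.cast_nonneg)
    (fun v ↦ integrable_exp_mul_of_ae_abs_le (measurable_finsetSum fun t _ ↦ hZ t)
      (ae_abs_sum_le_card _ hZ₁) v)
    (mgf_sum_range_div_le hZ hZ₁ hZ₀ hm ε T)
    (by simpa [neg_div] using mgf_sum_range_div_le hZ hZ₁ hZ₀ hm (-ε) T)
  rw [abs_of_nonneg hε] at tail
  have hexponent : -(ε / m) * (ε * T) + (T / m : ℕ) * (ε ^ 2 / 2) ≤ -(T / m * ε ^ 2 / 2) := by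
    have : ((T / m : ℕ) : ℝ) * (ε ^ 2 / 2) ≤ T / m * (ε ^ 2 / 2) := by
      gcongr; exact Nat.cast_div_le
    linear_combination this
  refine (measureReal_mono hsub).trans (tail.trans ?_)
  set C := Real.exp ε * (1 + alphaMix μ Z m * (T / m : ℕ) * Real.exp ((T / m : ℕ) * ε))
  have hC : 0 ≤ C := by have := alphaMix_nonneg (μ := μ) (Z := Z) (l := m); positivity
  calc _ = 2 * C * Real.exp (-(ε / m) * (ε * T) + (T / m : ℕ) * (ε ^ 2 / 2)) := by
        rw [Real.exp_add]; ring
    _ ≤ 2 * C * Real.exp (-(T / m * ε ^ 2 / 2)) := by gcongr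

end BoundedProcess

section Rates

/-- The spacing `m = ⌈T ^ (1 / (r + 1))⌉` of the subsequences into which the times `t < T` are
split: it balances the number `T / m` of terms of each against the exponent `m ^ r` in the bound on
`α(m)`. -/
def timeSpacing (r : ℝ) (T : ℕ) : ℕ := ⌈(T : ℝ) ^ (1 / (r + 1))⌉₊

variable {r : ℝ} {T : ℕ}

lemma timeSpacing_pos (hT : 1 ≤ T) : 0 < timeSpacing r T :=
  Nat.ceil_pos.2 (Real.rpow_pos_of_pos (by exact_mod_cast hT) _)

lemma rpow_le_timeSpacing_rpow (hr : 0 ≤ r) :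
    (T : ℝ) ^ (r / (r + 1)) ≤ (timeSpacing r T : ℝ) ^ r := by
  calc (T : ℝ) ^ (r / (r + 1)) = ((T : ℝ) ^ (1 / (r + 1))) ^ r := by
        rw [← Real.rpow_mul T.cast_nonneg, one_div_mul_eq_div]
    _ ≤ (timeSpacing r T : ℝ) ^ r := by gcongr; exact Nat.le_ceil _

lemma rpow_mul_rpow_one_div (hr : 0 ≤ r) (hT : 1 ≤ T) :
    (T : ℝ) ^ (r / (r + 1)) * (T : ℝ) ^ (1 / (r + 1)) = T := by
  rw [← Real.rpow_add (by exact_mod_cast hT), ← add_div, div_self (by positivity), Real.rpow_one]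

lemma rpow_div_add_one_le (hr : 0 ≤ r) (hT : 1 ≤ T) : (T : ℝ) ^ (r / (r + 1)) ≤ T := by
  conv_rhs => rw [← Real.rpow_one T]
  exact Real.rpow_le_rpow_of_exponent_le (by exact_mod_cast hT)
    ((div_le_one (by positivity)).2 (by linarith))

lemma div_timeSpacing_le (hr : 0 ≤ r) (hT : 1 ≤ T) :
    (T : ℝ) / timeSpacing r T ≤ (T : ℝ) ^ (r / (r + 1)) := by
  refine div_le_of_le_mul₀ (by positivity) (by positivity) ?_
  conv_lhs => rw [← rpow_mul_rpow_one_div hr hT]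
  gcongr
  exact Nat.le_ceil _

lemma rpow_div_two_le_div_timeSpacing (hr : 0 ≤ r) (hT : 1 ≤ T) :
    (T : ℝ) ^ (r / (r + 1)) / 2 ≤ (T : ℝ) / timeSpacing r T := by
  have hm : (0 : ℝ) < timeSpacing r T := by exact_mod_cast timeSpacing_pos hT
  have hceil : (timeSpacing r T : ℝ) ≤ 2 * (T : ℝ) ^ (1 / (r + 1)) :=
    Nat.ceil_le_two_mul <| (by norm_num : (2⁻¹ : ℝ) ≤ 1).trans <|
      Real.one_le_rpow (by exact_mod_cast hT) (by positivity)
  rw [le_div_iff₀ hm]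
  calc (T : ℝ) ^ (r / (r + 1)) / 2 * timeSpacing r T
      ≤ (T : ℝ) ^ (r / (r + 1)) / 2 * (2 * (T : ℝ) ^ (1 / (r + 1))) := by gcongr
    _ = T := by rw [div_mul_eq_mul_div, mul_left_comm, rpow_mul_rpow_one_div hr hT]; ring

lemma tendsto_natCast_rpow_atTop {β : ℝ} (hβ : 0 < β) :
    Tendsto (fun T : ℕ ↦ (T : ℝ) ^ β) atTop atTop :=
  (tendsto_rpow_atTop hβ).comp tendsto_natCast_atTop_atTop

end Rates

section Bernstein

variable {Ω : Type*} [MeasurableSpace Ω] {μ : Measure Ω} {K r : ℝ} {ε : ℕ → ℝ}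

lemma tendsto_alphaMix_timeSpacing_mul_exp {E : Type*} [MeasurableSpace E] {Z : ℕ → Ω → E}
    (hK : 0 < K) (hr : 0 < r)
    (hmix : ∀ l : ℕ, 1 ≤ l → alphaMix μ Z l ≤ Real.exp (-K * (l : ℝ) ^ r))
    (hε₀ : ∀ T, 0 ≤ ε T) (hε : Tendsto ε atTop (nhds 0)) :
    Tendsto (fun T : ℕ ↦ alphaMix μ Z (timeSpacing r T) * (T / timeSpacing r T : ℕ) *
      Real.exp ((T / timeSpacing r T : ℕ) * ε T)) atTop (nhds 0) := by
  have hlim : Tendsto (fun T : ℕ ↦ (T : ℝ) ^ (r / (r + 1)) *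
      Real.exp (-(K / 2) * (T : ℝ) ^ (r / (r + 1)))) atTop (nhds 0) := by
    simpa only [Real.rpow_one, Function.comp_def] using
      (tendsto_rpow_mul_exp_neg_mul_atTop_nhds_zero 1 (K / 2) (half_pos hK)).comp
        (tendsto_natCast_rpow_atTop (by positivity : 0 < r / (r + 1)))
  have hnonneg (T : ℕ) : 0 ≤ alphaMix μ Z (timeSpacing r T) := alphaMix_nonneg
  refine squeeze_zero' (.of_forall fun T ↦ by have := hnonneg T; positivity) ?_ hlim
  filter_upwards [eventually_ge_atTop 1, hε.eventually_le_const (half_pos hK)] with T hT hεK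
  set Q := (T : ℝ) ^ (r / (r + 1))
  have hα : alphaMix μ Z (timeSpacing r T) ≤ Real.exp (-K * Q) :=
    (hmix _ (timeSpacing_pos hT)).trans <| Real.exp_le_exp.2 <|
      mul_le_mul_of_nonpos_left (rpow_le_timeSpacing_rpow hr.le) (neg_nonpos.2 hK.le)
  have hn : ((T / timeSpacing r T : ℕ) : ℝ) ≤ Q :=
    Nat.cast_div_le.trans (div_timeSpacing_le hr.le hT)
  calc alphaMix μ Z (timeSpacing r T) * (T / timeSpacing r T : ℕ) *
        Real.exp ((T / timeSpacing r T : ℕ) * ε T)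
      ≤ Real.exp (-K * Q) * Q * Real.exp (Q * (K / 2)) := by
        gcongr
        exact hε₀ T
    _ = Q * Real.exp (-(K / 2) * Q) := by
        rw [mul_comm _ Q, mul_assoc, ← Real.exp_add]; ring_nf

theorem eventually_measureReal_lt_abs_mean_le [IsProbabilityMeasure μ] {Z : ℕ → Ω → ℝ}
    (hZ : ∀ t, Measurable (Z t)) (hZ₁ : ∀ t, ∀ᵐ ω ∂μ, |Z t ω| ≤ 1) (hZ₀ : ∀ t, ∫ ω, Z t ω ∂μ = 0)
    (hK : 0 < K) (hr : 0 < r)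
    (hmix : ∀ l : ℕ, 1 ≤ l → alphaMix μ Z l ≤ Real.exp (-K * (l : ℝ) ^ r))
    (hε₀ : ∀ T, 0 ≤ ε T) (hε : Tendsto ε atTop (nhds 0)) :
    ∀ᶠ T : ℕ in atTop, μ.real {ω | ε T < |(T : ℝ)⁻¹ * ∑ t ∈ Finset.range T, Z t ω|} ≤
      4 * Real.exp (-((T : ℝ) ^ (r / (r + 1)) * ε T ^ 2 / 4)) := by
  have hfactor : Tendsto (fun T : ℕ ↦ Real.exp (ε T) *
      (1 + alphaMix μ Z (timeSpacing r T) * (T / timeSpacing r T : ℕ) *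
        Real.exp ((T / timeSpacing r T : ℕ) * ε T))) atTop (nhds 1) := by
    simpa using (hε.rexp).mul
      ((tendsto_alphaMix_timeSpacing_mul_exp hK hr hmix hε₀ hε).const_add 1)
  filter_upwards [eventually_ge_atTop 1, hfactor.eventually_le_const one_lt_two] with T hT hle
  refine (measureReal_lt_abs_mean_le hZ hZ₁ hZ₀ (timeSpacing_pos (r := r) hT) (hε₀ T) T).trans ?_
  have hQ_le := rpow_div_two_le_div_timeSpacing hr.le hT
  calc _ ≤ 2 * 2 * Real.exp (-((T : ℝ) ^ (r / (r + 1)) / 2 * ε T ^ 2 / 2)) := by gcongr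
    _ = 4 * Real.exp (-((T : ℝ) ^ (r / (r + 1)) * ε T ^ 2 / 4)) := by ring_nf

lemma sqrt_div_le_sqrt_of_le_mul_sq {a b x : ℝ} (hx : 0 ≤ x) (h : a ≤ b * x ^ 2) :
    √a / x ≤ √b := by
  refine div_le_of_le_mul₀ hx b.sqrt_nonneg ?_
  calc √a ≤ √(b * x ^ 2) := Real.sqrt_le_sqrt h
    _ = √b * x := by rw [Real.sqrt_mul' b (sq_nonneg x), Real.sqrt_sq hx]

lemma one_add_mul_le_of_le_sqrt {a x y : ℝ} (ha : 0 ≤ a) (hy : 0 ≤ y) (hx : x ≤ √y)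
    (hay : 1 + a ≤ √y) : 1 + a * x ≤ y := by
  have hone : 1 ≤ √y := by linarith
  calc 1 + a * x ≤ √y + a * √y := by gcongr
    _ = (1 + a) * √y := by ring
    _ ≤ √y * √y := by gcongr
    _ = y := Real.mul_self_sqrt hy

theorem eventually_one_add_div_pow_mul_measureReal_le [IsProbabilityMeasure μ] {Z : ℕ → Ω → ℝ}
    {p : ℕ → ℕ} {K₃ : ℝ} (hZ : ∀ t, Measurable (Z t)) (hZ₁ : ∀ t, ∀ᵐ ω ∂μ, |Z t ω| ≤ 1)
    (hZ₀ : ∀ t, ∫ ω, Z t ω ∂μ = 0) (hK : 0 < K) (hr : 0 < r)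
    (hmix : ∀ l : ℕ, 1 ≤ l → alphaMix μ Z l ≤ Real.exp (-K * (l : ℝ) ^ r))
    (hε₀ : ∀ T, 0 ≤ ε T) (hε : Tendsto ε atTop (nhds 0))
    (hp : ∀ᶠ T : ℕ in atTop,
      4 * ((p T + 1 : ℕ) * Real.log T) ≤ (T : ℝ) ^ (r / (r + 1)) * ε T ^ 2)
    (hK₃ : 0 ≤ K₃) :
    ∀ᶠ T : ℕ in atTop, (1 + K₃ * √(p T) / ε T) ^ p T *
      μ.real {ω | ε T < |(T : ℝ)⁻¹ * ∑ t ∈ Finset.range T, Z t ω|} ≤ 4 / T := by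
  have hsqrt : Tendsto (fun T : ℕ ↦ √T) atTop atTop :=
    Real.tendsto_sqrt_atTop.comp tendsto_natCast_atTop_atTop
  have hlog : Tendsto (fun T : ℕ ↦ Real.log T) atTop atTop :=
    Real.tendsto_log_atTop.comp tendsto_natCast_atTop_atTop
  filter_upwards [eventually_measureReal_lt_abs_mean_le hZ hZ₁ hZ₀ hK hr hmix hε₀ hε, hp,
    eventually_ge_atTop 1, hsqrt.eventually_ge_atTop (1 + K₃), hlog.eventually_ge_atTop 1]
    with T htail hpT hT hK₃T hlogT
  have hT₀ : (0 : ℝ) < T := by exact_mod_cast hT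
  set Q := (T : ℝ) ^ (r / (r + 1))
  have hQT : Q ≤ T := rpow_div_add_one_le hr.le hT
  have hbase : 1 + K₃ * √(p T) / ε T ≤ T := by
    have hpQ : (p T : ℝ) ≤ Q * ε T ^ 2 := by
      push_cast at hpT
      nlinarith [(p T).cast_nonneg (α := ℝ)]
    rw [mul_div_assoc]
    exact one_add_mul_le_of_le_sqrt hK₃ hT₀.le
      ((sqrt_div_le_sqrt_of_le_mul_sq (hε₀ T) hpQ).trans (Real.sqrt_le_sqrt hQT)) hK₃T
  have hexp : Real.exp (-(Q * ε T ^ 2 / 4)) ≤ ((T : ℝ) ^ (p T + 1))⁻¹ := by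
    rw [Real.exp_neg, ← Real.exp_log (pow_pos hT₀ _), Real.log_pow]
    gcongr
    linarith
  have := hε₀ T
  calc _ ≤ (T : ℝ) ^ p T * (4 * ((T : ℝ) ^ (p T + 1))⁻¹) := by
        gcongr
        exact htail.trans (by gcongr)
    _ = 4 / T := by rw [pow_succ]; field_simp

end Bernstein

section DeviationRadius

/-- The threshold `ε_T = √(K₁ K₂ p log T / T ^ β) + √(K₂ log T / T ^ β)` with `K₁ = 3 / 2` and
`K₂ = 64 * σ2`. -/
def deviationRadius (σ2 β : ℝ) (p : ℕ → ℕ) (T : ℕ) : ℝ :=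
  √((3 / 2) * (64 * σ2) * (p T : ℝ) * Real.log T / (T : ℝ) ^ β) +
    √((64 * σ2) * Real.log T / (T : ℝ) ^ β)

variable {σ2 β : ℝ} {p : ℕ → ℕ}

lemma deviationRadius_nonneg (T : ℕ) : 0 ≤ deviationRadius σ2 β p T := by
  unfold deviationRadius; positivity

lemma tendsto_deviationRadius (hβ : 0 < β)
    (hp : (fun T : ℕ ↦ (p T : ℝ) * Real.log T) =o[atTop] fun T : ℕ ↦ (T : ℝ) ^ β) :
    Tendsto (deviationRadius σ2 β p) atTop (nhds 0) := by
  have hlog : (fun T : ℕ ↦ Real.log T) =o[atTop] fun T : ℕ ↦ (T : ℝ) ^ β :=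
    (isLittleO_log_rpow_atTop hβ).comp_tendsto tendsto_natCast_atTop_atTop
  have h₁ := ((hp.const_mul_left (3 / 2 * (64 * σ2))).tendsto_div_nhds_zero).sqrt
  have h₂ := ((hlog.const_mul_left (64 * σ2)).tendsto_div_nhds_zero).sqrt
  unfold deviationRadius
  simpa only [← mul_assoc, Real.sqrt_zero, add_zero] using h₁.add h₂

lemma add_le_sq_sqrt_add_sqrt {x y : ℝ} (hx : 0 ≤ x) (hy : 0 ≤ y) : x + y ≤ (√x + √y) ^ 2 := by
  rw [add_sq, Real.sq_sqrt hx, Real.sq_sqrt hy]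
  linarith [mul_nonneg x.sqrt_nonneg y.sqrt_nonneg]

lemma four_mul_log_le_rpow_mul_deviationRadius_sq (hσ2 : 1 / 16 ≤ σ2) {T : ℕ} (hT : 1 ≤ T) :
    4 * ((p T + 1 : ℕ) * Real.log T) ≤ (T : ℝ) ^ β * deviationRadius σ2 β p T ^ 2 := by
  have : 0 ≤ σ2 := by linarith
  have : 0 ≤ Real.log T := Real.log_natCast_nonneg T
  have : (0 : ℝ) < (T : ℝ) ^ β := Real.rpow_pos_of_pos (by exact_mod_cast hT) β
  calc 4 * ((p T + 1 : ℕ) * Real.log T)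
      ≤ 64 * (1 / 16) * ((3 / 2 * p T + 1) * Real.log T) := by
        push_cast
        norm_num
        gcongr
        linarith [(p T).cast_nonneg (α := ℝ)]
    _ ≤ 64 * σ2 * ((3 / 2 * p T + 1) * Real.log T) := by gcongr
    _ = (T : ℝ) ^ β * ((3 / 2) * (64 * σ2) * (p T : ℝ) * Real.log T / (T : ℝ) ^ β +
          (64 * σ2) * Real.log T / (T : ℝ) ^ β) := by field_simp
    _ ≤ (T : ℝ) ^ β * deviationRadius σ2 β p T ^ 2 := by
        gcongr
        exact add_le_sq_sqrt_add_sqrt (by positivity) (by positivity)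

lemma isLittleO_floor_rpow_mul_log {K a b : ℝ} (hK : 0 ≤ K) (hab : a < b) :
    (fun T : ℕ ↦ (⌊K * (T : ℝ) ^ a⌋₊ : ℝ) * Real.log T) =o[atTop] fun T : ℕ ↦ (T : ℝ) ^ b := by
  have hfloor : (fun T : ℕ ↦ (⌊K * (T : ℝ) ^ a⌋₊ : ℝ)) =O[atTop] fun T : ℕ ↦ (T : ℝ) ^ a :=
    .of_bound K <| .of_forall fun T ↦ by
      have hTa : 0 ≤ (T : ℝ) ^ a := by positivity
      rw [Real.norm_natCast, Real.norm_of_nonneg hTa]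
      exact Nat.floor_le (by positivity)
  have hlog : (fun T : ℕ ↦ Real.log T) =o[atTop] fun T : ℕ ↦ (T : ℝ) ^ (b - a) :=
    (isLittleO_log_rpow_atTop (sub_pos.2 hab)).comp_tendsto tendsto_natCast_atTop_atTop
  refine (hfloor.mul_isLittleO hlog).congr' .rfl ?_
  filter_upwards [eventually_gt_atTop 0] with T hT
  rw [← Real.rpow_add (by exact_mod_cast hT), add_sub_cancel]

end DeviationRadius

lemma abs_sub_integral_le_sub {Ω : Type*} [MeasurableSpace Ω] {μ : Measure Ω}
    [IsProbabilityMeasure μ] {W : Ω → ℝ} {a b : ℝ} (hW : AEMeasurable W μ)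
    (hWab : ∀ᵐ ω ∂μ, W ω ∈ Set.Icc a b) : ∀ᵐ ω ∂μ, |W ω - ∫ ω', W ω' ∂μ| ≤ b - a := by
  have hmean : ∫ ω, W ω ∂μ ∈ Set.Icc a b :=
    (convex_Icc a b).integral_mem isClosed_Icc hWab (.of_mem_Icc a b hW hWab)
  exact hWab.mono fun ω hω ↦ abs_sub_le_of_le_of_le hω.1 hω.2 hmean.1 hmean.2

theorem bernoulli_mixing_concentration_general {Ω : Type*} [MeasurableSpace Ω] {μ : Measure Ω}
    [IsProbabilityMeasure μ] {Z : ℕ → Ω → ℝ} (hZ : ∀ t, Measurable (Z t))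
    (hZ₁ : ∀ t, ∀ᵐ ω ∂μ, |Z t ω| ≤ 1) (hZ₀ : ∀ t, ∫ ω, Z t ω ∂μ = 0)
    {K r σ2 K₃ : ℝ} (hK : 0 < K) (hr : 0 < r)
    (hmix : ∀ l : ℕ, 1 ≤ l → alphaMix μ Z l ≤ Real.exp (-K * (l : ℝ) ^ r))
    {p : ℕ → ℕ}
    (hp : (fun T : ℕ ↦ (p T : ℝ) * Real.log T) =o[atTop] fun T : ℕ ↦ (T : ℝ) ^ (r / (r + 1)))
    (hσ2 : 1 / 16 ≤ σ2) (hK₃ : 0 ≤ K₃) :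
    ∀ᶠ T : ℕ in atTop,
      (1 + K₃ * √(p T) / deviationRadius σ2 (r / (r + 1)) p T) ^ p T *
        μ.real {ω | deviationRadius σ2 (r / (r + 1)) p T <
          |(T : ℝ)⁻¹ * ∑ t ∈ Finset.range T, Z t ω|} ≤ 4 / T :=
  eventually_one_add_div_pow_mul_measureReal_le hZ hZ₁ hZ₀ hK hr hmix deviationRadius_nonneg
    (tendsto_deviationRadius (by positivity) hp)
    ((eventually_ge_atTop 1).mono fun _ ↦ four_mul_log_le_rpow_mul_deviationRadius_sq hσ2) hK₃

/- STATEMENT 10: Bernstein-type bound for centered Bernoulli α-mixing sequences.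
With σ² = 1/4 + 8 Σ_{l≥1} α(l), K₁ = 3/2, K₂ = 64σ²,
ε_T = sqrt(K₁K₂ p log T / T^{r_α/(r_α+1)}) + sqrt(K₂ log T / T^{r_α/(r_α+1)}),
p = ⌊K_p T^{r_p}⌋, for any K₃ > 0 and all T large,
(1 + K₃ p^{1/2}/ε_T)^p P(|T⁻¹ Σ Z_t| > ε_T) ≤ 4/T + o(1/T). -/
theorem bernoulli_mixing_concentration
    {Ω : Type*} [MeasurableSpace Ω] (μ : Measure Ω) [IsProbabilityMeasure μ]
    (Z W : ℕ → Ω → ℝ)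
    (hW : ∀ t ω, W t ω = 0 ∨ W t ω = 1)
    (hWmeas : ∀ t, Measurable (W t))
    (hZ : ∀ t ω, Z t ω = W t ω - ∫ ω', W t ω' ∂μ)
    (K_α r_α K_p r_p : ℝ) (hKα : 0 < K_α) (hrα : 0 < r_α)
    (hKp : 0 < K_p) (hrp0 : 0 ≤ r_p) (hrp : r_p < r_α / (r_α + 1))
    (hmix : ∀ l : ℕ, 1 ≤ l → alphaMix μ Z l < Real.exp (-K_α * (l : ℝ) ^ r_α))
    (p : ℕ → ℕ) (hp : ∀ T, p T = Nat.floor (K_p * (T : ℝ) ^ r_p))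
    (σ2 : ℝ) (hσ2 : σ2 = 1 / 4 + 8 * ∑' l : ℕ, alphaMix μ Z (l + 1))
    (ε : ℕ → ℝ)
    (hε : ∀ T : ℕ, ε T =
      Real.sqrt ((3 / 2) * (64 * σ2) * (p T : ℝ) * Real.log T / (T : ℝ) ^ (r_α / (r_α + 1)))
        + Real.sqrt ((64 * σ2) * Real.log T / (T : ℝ) ^ (r_α / (r_α + 1)))) :
    ∀ K_3 : ℝ, 0 < K_3 →
      ∃ e : ℕ → ℝ, e =o[atTop] (fun T : ℕ => (T : ℝ)⁻¹) ∧
        ∀ᶠ T : ℕ in atTop,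
          (1 + K_3 * Real.sqrt (p T) / ε T) ^ (p T) *
              (μ {ω | ε T < |(T : ℝ)⁻¹ * ∑ t ∈ Finset.range T, Z t ω|}).toReal
            ≤ 4 / (T : ℝ) + e T := by
  intro K_3 hK_3
  obtain rfl : p = fun T : ℕ ↦ ⌊K_p * (T : ℝ) ^ r_p⌋₊ := funext hp
  obtain rfl : ε = deviationRadius σ2 (r_α / (r_α + 1)) _ := funext hε
  have hσ2' : 1 / 16 ≤ σ2 := by
    have hseries : 0 ≤ ∑' l, alphaMix μ Z (l + 1) := tsum_nonneg fun _ ↦ alphaMix_nonneg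
    linarith
  obtain rfl : Z = fun t ω ↦ W t ω - ∫ ω', W t ω' ∂μ := funext₂ hZ
  have hW₁ (t : ℕ) : ∀ᵐ ω ∂μ, W t ω ∈ Set.Icc 0 1 :=
    ae_of_all _ fun ω ↦ by rcases hW t ω with h | h <;> simp [h]
  refine ⟨0, isLittleO_zero _ _, ?_⟩
  simpa only [Pi.zero_apply, add_zero, measureReal_def] using
    bernoulli_mixing_concentration_general (fun t ↦ (hWmeas t).sub_const _)
      (fun t ↦ by
        simpa only [sub_zero] using abs_sub_integral_le_sub (hWmeas t).aemeasurable (hW₁ t))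
      (fun t ↦ by simpa only [average_eq_integral] using integral_sub_average μ (W t))
      hKα hrα (fun l hl ↦ (hmix l hl).le) (isLittleO_floor_rpow_mul_log hKp.le hrp) hσ2' hK_3.le

end
end

section
/- Let c > 0, δ̄ > 0, κ > 0 with c − δ̄ > 0. Suppose z = (z_1, z_{−1}) ∈ R × R^{p−1} satisfies (c + δ̄ w_1) z_1 + δ̄ w_{−1}' z_{−1} = κ for some w = (w_1, w_{−1}) ∈ R × R^{p−1} with ||w||_2 ≤ 1. Then z_1 ≤ κ/(c − δ̄) + (δ̄/(c − δ̄)) ||z_{−1}||_2 and z_1 ≥ κ/(c + δ̄) − (δ̄/(c − δ̄)) ||z_{−1}||_2; that is, the union over ||w||_2 ≤ 1 of the hyperplanes {z : (c + δ̄ w_1) z_1 + δ̄ w_{−1}' z_{−1} = κ} is contained in the intersection of the region underneath the hyper-cone z_1 = κ/(c − δ̄) + (δ̄/(c − δ̄)) sqrt(z_2² + ... + z_p²) and the region above the hyper-cone z_1 = κ/(c + δ̄) − (δ̄/(c − δ̄)) sqrt(z_2² + ... + z_p²). -/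
/-!
Dividing `a * x + s = b` by its leading coefficient `a` puts `x` within `|s| / a` of the intercept
`b / a`. Over the unit ball of coefficients, `a = c + δ * w₁` stays in `[c - δ, c + δ]`, so the
intercept stays in `[b / (c + δ), b / (c - δ)]`, while `s` is `δ` times a functional of norm at most
one evaluated at the remaining coordinates, so `|s| / a ≤ δ / (c - δ) * ‖z‖`.
-/

section OrderedField

variable {K : Type*} [Field K] [LinearOrder K] [IsStrictOrderedRing K]

theorem abs_sub_div_le_div_of_mul_add_eq {a b l r s x : K} (hl : 0 < l) (hla : l ≤ a)
    (hs : |s| ≤ r) (h : a * x + s = b) : |x - b / a| ≤ r / l := by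
  have ha : 0 < a := hl.trans_le hla
  have hdiff : x - b / a = -s / a := by
    rw [← h]
    field_simp
    ring
  calc |x - b / a| = |s| / a := by rw [hdiff, abs_div, abs_neg, abs_of_pos ha]
    _ ≤ r / l := div_le_div₀ ((abs_nonneg s).trans hs) hs hl hla

theorem mem_Icc_div_of_mul_add_eq {a b l u r s x : K} (hl : 0 < l) (ha : a ∈ Set.Icc l u)
    (hb : 0 ≤ b) (hs : |s| ≤ r) (h : a * x + s = b) :
    x ∈ Set.Icc (b / u - r / l) (b / l + r / l) := by
  obtain ⟨hlower, hupper⟩ := abs_le.1 (abs_sub_div_le_div_of_mul_add_eq hl ha.1 hs h)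
  have hbl : b / a ≤ b / l := div_le_div_of_nonneg_left hb hl ha.1
  have hbu : b / u ≤ b / a := div_le_div_of_nonneg_left hb (hl.trans_le ha.1) ha.2
  constructor <;> linarith

end OrderedField

theorem add_mul_mem_Icc_of_abs_le_one {R : Type*} [Ring R] [LinearOrder R] [IsOrderedRing R]
    {c δ t : R} (hδ : 0 ≤ δ) (ht : |t| ≤ 1) : c + δ * t ∈ Set.Icc (c - δ) (c + δ) := by
  have hδt : |δ * t| ≤ δ := by
    simpa only [abs_mul, abs_of_nonneg hδ, mul_one] using mul_le_mul_of_nonneg_left ht hδ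
  obtain ⟨hlower, hupper⟩ := abs_le.1 hδt
  exact ⟨by simpa only [sub_eq_add_neg] using add_le_add_right hlower c,
    add_le_add_right hupper c⟩

theorem norm_toLp_two_eq_sqrt {ι : Type*} [Fintype ι] (v : ι → ℝ) :
    ‖WithLp.toLp 2 v‖ = √(∑ i, v i ^ 2) := by
  simp only [EuclideanSpace.norm_eq, Real.norm_eq_abs, sq_abs]

theorem cone_containment_general {E : Type*} [SeminormedAddCommGroup E] [NormedSpace ℝ E]
    {c δ κ z₁ w₁ : ℝ} {z : E} {w : StrongDual ℝ E} (hδ : 0 ≤ δ) (hκ : 0 ≤ κ) (hcδ : 0 < c - δ)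
    (hw₁ : |w₁| ≤ 1) (hw : ‖w‖ ≤ 1) (h : (c + δ * w₁) * z₁ + δ * w z = κ) :
    z₁ ≤ κ / (c - δ) + δ / (c - δ) * ‖z‖ ∧ κ / (c + δ) - δ / (c - δ) * ‖z‖ ≤ z₁ := by
  have hwz : |δ * w z| ≤ δ * ‖z‖ := by
    have hwz_norm : |w z| ≤ ‖z‖ := by simpa using w.le_of_opNorm_le hw z
    rw [abs_mul, abs_of_nonneg hδ]
    exact mul_le_mul_of_nonneg_left hwz_norm hδ
  rw [div_mul_eq_mul_div]
  exact (mem_Icc_div_of_mul_add_eq hcδ (add_mul_mem_Icc_of_abs_le_one hδ hw₁) hκ hwz h).symm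

/- STATEMENT 14: algebraic cone containment.
If z = (z₁, z₋₁) satisfies (c + δ̄ w₁) z₁ + δ̄ w₋₁'z₋₁ = κ for some w with ‖w‖₂ ≤ 1,
then z₁ ≤ κ/(c−δ̄) + (δ̄/(c−δ̄))‖z₋₁‖₂ and z₁ ≥ κ/(c+δ̄) − (δ̄/(c−δ̄))‖z₋₁‖₂. -/
theorem cone_containment {n : ℕ} (c δ κ : ℝ)
    (hc : 0 < c) (hδ : 0 < δ) (hκ : 0 < κ) (hcδ : 0 < c - δ)
    (z1 : ℝ) (zrest : Fin n → ℝ) (w1 : ℝ) (wrest : Fin n → ℝ)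
    (hw : Real.sqrt (w1 ^ 2 + ∑ i, wrest i ^ 2) ≤ 1)
    (heq : (c + δ * w1) * z1 + δ * ∑ i, wrest i * zrest i = κ) :
    z1 ≤ κ / (c - δ) + (δ / (c - δ)) * Real.sqrt (∑ i, zrest i ^ 2) ∧
    κ / (c + δ) - (δ / (c - δ)) * Real.sqrt (∑ i, zrest i ^ 2) ≤ z1 := by
  have hw1 : |w1| ≤ 1 :=
    (Real.abs_le_sqrt (le_add_of_nonneg_right (by positivity))).trans hw
  have hwrest : ‖innerSL ℝ (WithLp.toLp 2 wrest)‖ ≤ 1 := by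
    rw [innerSL_apply_norm, norm_toLp_two_eq_sqrt]
    exact (Real.sqrt_le_sqrt (le_add_of_nonneg_left (sq_nonneg w1))).trans hw
  rw [← norm_toLp_two_eq_sqrt]
  refine cone_containment_general hδ.le hκ.le hcδ hw1 hwrest ?_
  simpa only [innerSL_apply_apply, PiLp.inner_apply, RCLike.inner_apply, conj_trivial, mul_comm]
    using heq
end
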